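/- For every formula φ ∈ L_⊞, {φ} ⊢_⊞ nf(φ) and {nf(φ)} ⊢_⊞ φ. In particular, for every formula φ built from a single propositional variable p, {φ} ⊢_⊞ p and {p} ⊢_⊞ φ, so any two formulas in one and the same variable are interderivable in ⊢_⊞. -/

import Mathlib

/-- Formulas built from countably many propositional variables with a single
binary connective `⊞` (platypus). -/
inductive Fm : Type where
  | var : ℕ → Fm
  | pl : Fm → Fm → Fm
deriving DecidableEq

namespace Fm

/-- The set of propositional variables occurring in a formula. -/
def vars : Fm → Set ℕ
  | var n => {n}
  | pl a b => vars a ∪ vars b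

/-- A `𝔅_⊞`-valuation: a two-valued function such that
`v (φ ⊞ ψ) ∈ {min (v φ) (v ψ), max (v φ) (v ψ)}`. -/
def IsVal (v : Fm → Bool) : Prop :=
  ∀ a b : Fm, v (a.pl b) = (v a && v b) ∨ v (a.pl b) = (v a || v b)

/-- The multiple-conclusion consequence `Γ ⊩_⊞ Δ`. -/
def Mc (Γ Δ : Set Fm) : Prop :=
  ∀ v : Fm → Bool, IsVal v → (∀ φ ∈ Γ, v φ = true) → ∃ ψ ∈ Δ, v ψ = true

/-- The single-conclusion consequence `Γ ⊢_⊞ φ`. -/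
def Sc (Γ : Set Fm) (φ : Fm) : Prop := Mc Γ {φ}

end Fm

namespace Fm

/-- The normal form of a formula: `nf p = p` and `nf (φ ⊞ ψ)` is `nf φ` if
`nf φ = nf ψ` and `φ ⊞ ψ` otherwise. -/
def nf : Fm → Fm
  | var n => var n
  | pl a b => if nf a = nf b then nf a else pl a b

theorem val_nf (v : Fm → Bool) (hv : IsVal v) (φ : Fm) : v φ.nf = v φ := by
  induction φ with
  | var n => rfl
  | pl a b iha ihb =>
    unfold nf
    split_ifs with h
    · rw [h, ihb] at iha
      rw [h, ihb]
      rcases hv a b with h1 | h1 <;> rw [h1, iha] <;> simp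
    · rfl

theorem val_single (v : Fm → Bool) (hv : IsVal v) (p : ℕ) (φ : Fm)
    (hp : φ.vars ⊆ {p}) : v φ = v (Fm.var p) := by
  induction φ with
  | var n =>
    have h : n = p := hp (show n ∈ ({n} : Set ℕ) from rfl)
    rw [h]
  | pl a b iha ihb =>
    have ha := iha (fun x hx => hp (Or.inl hx))
    have hb := ihb (fun x hx => hp (Or.inr hx))
    rcases hv a b with h1 | h1 <;> rw [h1, ha, hb] <;> simp

theorem sc_of_val (φ ψ : Fm) (h : ∀ v, IsVal v → v φ = v ψ) : Sc {φ} ψ :=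
  fun v hv hφ => ⟨ψ, rfl, (h v hv).symm.trans (hφ φ rfl)⟩

end Fm

open Fm in
/-- every formula is interderivable with its normal form; in
particular every formula in a single variable `p` is interderivable with `p`,
so any two formulas in one and the same variable are interderivable. -/
theorem platypus_nf_interderivable :
    (∀ φ : Fm, Sc {φ} φ.nf ∧ Sc {φ.nf} φ) ∧
    (∀ (p : ℕ) (φ : Fm), φ.vars ⊆ {p} → Sc {φ} (Fm.var p) ∧ Sc {Fm.var p} φ) ∧
    (∀ (p : ℕ) (φ ψ : Fm), φ.vars ⊆ {p} → ψ.vars ⊆ {p} →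
      Sc {φ} ψ ∧ Sc {ψ} φ) := by
  refine ⟨fun φ => ⟨?_, ?_⟩, fun p φ h => ⟨?_, ?_⟩, fun p φ ψ h h' => ⟨?_, ?_⟩⟩ <;>
    refine sc_of_val _ _ fun v hv => ?_
  · exact (val_nf v hv φ).symm
  · exact val_nf v hv φ
  · exact val_single v hv p φ h
  · exact (val_single v hv p φ h).symm
  · exact (val_single v hv p φ h).trans (val_single v hv p ψ h').symm
  · exact (val_single v hv p ψ h').trans (val_single v hv p φ h).symm
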